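/- For every integer a ≥ 1 and for all points a₁, …, a_{2a+1} ∈ (ℂ²∖{0}) × (ℂ²∖{0}), there exists a nonzero bihomogeneous polynomial f(x₀, x₁; y₀, y₁) of bidegree (2a, 2) such that f and all four of its first-order partial derivatives vanish at each a_j. In particular, since the space of bidegree-(2a,2) bihomogeneous polynomials has dimension N = 3(2a+1), the space of such polynomials vanishing to order ≥ 2 at 2a+1 points always has dimension strictly greater than the expected value max{0, N − 3(2a+1)} = 0, so the pair (P¹×P¹, O(2a,2)) is secant defective in its (2a+1)-secant variety. -/

import Mathlib

open MvPolynomial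

noncomputable section

/-- The space of multihomogeneous polynomials of multidegree `d` in `k` groups of
variables, the `i`-th group having `n i + 1` variables. -/
def multiHomog {k : ℕ} (n d : Fin k → ℕ) :
    Submodule ℂ (MvPolynomial ((i : Fin k) × Fin (n i + 1)) ℂ) :=
  weightedHomogeneousSubmodule ℂ (fun v => (Pi.single v.1 1 : Fin k → ℕ)) d

/-- The space of polynomials vanishing at the point `p`. -/
def vanishingAt {k : ℕ} (n : Fin k → ℕ) (p : (i : Fin k) → Fin (n i + 1) → ℂ) :
    Submodule ℂ (MvPolynomial ((i : Fin k) × Fin (n i + 1)) ℂ) :=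
  LinearMap.ker ((aeval (fun v : (i : Fin k) × Fin (n i + 1) => p v.1 v.2)).toLinearMap :
    MvPolynomial ((i : Fin k) × Fin (n i + 1)) ℂ →ₗ[ℂ] ℂ)

/-- The space of polynomials vanishing to order `≥ 2` at the point `p`:
the polynomial and all its first-order partial derivatives vanish at `p`. -/
def doubleVanishingAt {k : ℕ} (n : Fin k → ℕ) (p : (i : Fin k) → Fin (n i + 1) → ℂ) :
    Submodule ℂ (MvPolynomial ((i : Fin k) × Fin (n i + 1)) ℂ) :=
  vanishingAt n p ⊓ ⨅ v : (i : Fin k) × Fin (n i + 1),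
    Submodule.comap (pderiv v).toLinearMap (vanishingAt n p)

/-- The space of multihomogeneous polynomials of multidegree `d` vanishing to order `≥ 2`
at each of the points `a j`. -/
def doubleVanishingSpace {k : ℕ} (n d : Fin k → ℕ) {z : ℕ}
    (a : Fin z → (i : Fin k) → Fin (n i + 1) → ℂ) :
    Submodule ℂ (MvPolynomial ((i : Fin k) × Fin (n i + 1)) ℂ) :=
  multiHomog n d ⊓ ⨅ j, doubleVanishingAt n (a j)


/-- Dimension vector of `ℙ¹ × ℙ¹`: two groups of `2` variables each. -/
def biDims : Fin 2 → ℕ := fun _ => 1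

/-- The exponent of the monomial `x₀^i x₁^(a-i) y_e`. -/
def expo (a : ℕ) (s : Fin (a + 1) × Fin 2) : ((i : Fin 2) × Fin (biDims i + 1)) →₀ ℕ :=
  Finsupp.single ⟨0, (0 : Fin 2)⟩ s.1.1 + Finsupp.single ⟨0, (1 : Fin 2)⟩ (a - s.1.1)
    + Finsupp.single ⟨1, (s.2 : Fin 2)⟩ 1

theorem expo_injective (a : ℕ) : Function.Injective (expo a) := by
  rintro ⟨i, e⟩ ⟨j, e'⟩ h
  have h0 := DFunLike.congr_fun h ⟨0, (0 : Fin 2)⟩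
  have h1 := DFunLike.congr_fun h ⟨1, (e : Fin 2)⟩
  have n1 : ∀ u v : Fin 2, (⟨1, (u : Fin 2)⟩ : (i : Fin 2) × Fin (biDims i + 1)) ≠ ⟨0, (v : Fin 2)⟩ := by
    intro u v hh
    have := congrArg Sigma.fst hh
    simp at this
  have n2 : (⟨0, (1 : Fin 2)⟩ : (i : Fin 2) × Fin (biDims i + 1)) ≠ ⟨0, (0 : Fin 2)⟩ := by
    intro hh
    have := eq_of_heq (Sigma.mk.inj hh).2
    exact absurd this (show (1 : Fin 2) ≠ 0 by decide)
  simp only [expo, Finsupp.add_apply, Finsupp.single_apply, if_neg (n1 _ _), if_neg n2,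
    if_neg (n1 _ _).symm, if_true] at h0 h1
  have hi : i = j := Fin.ext (by simpa using h0)
  have he : e = e' := by
    by_contra hne
    have : (⟨1, (e' : Fin 2)⟩ : (i : Fin 2) × Fin (biDims i + 1)) ≠ ⟨1, (e : Fin 2)⟩ := by
      intro hh
      exact hne (eq_of_heq (Sigma.mk.inj hh).2).symm
    rw [if_neg this] at h1
    omega
  rw [hi, he]

theorem expo_weight (a : ℕ) (s : Fin (a + 1) × Fin 2) :
    Finsupp.weight (fun v : (i : Fin 2) × Fin (biDims i + 1) => (Pi.single v.1 1 : Fin 2 → ℕ))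
      (expo a s) = ![a, 1] := by
  have := s.1.2
  simp only [expo, map_add, Finsupp.weight_single]
  ext k
  fin_cases k <;> simp
  omega

theorem multiHomog_finite (d : Fin 2 → ℕ) : Module.Finite ℂ (multiHomog biDims d) := by
  have hfg := weightedHomogeneousSubmodule_fg (R := ℂ)
    (fun _ : (i : Fin 2) × Fin (biDims i + 1) => 1) (fun _ => one_ne_zero) (d 0 + d 1)
  have := Module.Finite.iff_fg.mpr hfg
  refine Submodule.finiteDimensional_of_le (S₂ := weightedHomogeneousSubmodule ℂ
    (fun _ : (i : Fin 2) × Fin (biDims i + 1) => 1) (d 0 + d 1)) ?_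
  intro f hf m hm
  have h := hf hm
  rw [← h]
  simp only [Finsupp.weight_apply, Finsupp.sum, Finset.sum_apply, ← Finset.sum_add_distrib]
  refine Finset.sum_congr rfl ?_
  rintro ⟨i, j⟩ _
  fin_cases i <;> simp

/-- Example ex1 (defectivity part): for every `a ≥ 1` and **all** points
`a₁, …, a_{2a+1} ∈ (ℂ²∖{0}) × (ℂ²∖{0})` there is a nonzero bihomogeneous polynomial of
bidegree `(2a, 2)` vanishing to order `≥ 2` at each point; in particular the space of
such polynomials has dimension strictly greater than the expected value `0`, so
`(ℙ¹ × ℙ¹, O(2a,2))` is secant defective in its `(2a+1)`-secant variety. -/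
theorem P1xP1_bidegree_2a_2_defective (a : ℕ) (ha : 1 ≤ a)
    (p : Fin (2 * a + 1) → (i : Fin 2) → Fin (biDims i + 1) → ℂ)
    (hp : ∀ j i, p j i ≠ 0) :
    (∃ f, f ≠ 0 ∧ f ∈ doubleVanishingSpace biDims ![2 * a, 2] p) ∧
      0 < Module.finrank ℂ (doubleVanishingSpace biDims ![2 * a, 2] p) := by
  have key : ∃ f, f ≠ 0 ∧ f ∈ doubleVanishingSpace biDims ![2 * a, 2] p := by
    let L : (Fin (a + 1) × Fin 2 → ℂ) →ₗ[ℂ] MvPolynomial ((i : Fin 2) × Fin (biDims i + 1)) ℂ :=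
      ∑ s, (monomial (expo a s)) ∘ₗ LinearMap.proj s
    have hL : ∀ c, L c = ∑ s, monomial (expo a s) (c s) := by
      intro c
      simp [L]
    let E : (Fin (a + 1) × Fin 2 → ℂ) →ₗ[ℂ] (Fin (2 * a + 1) → ℂ) :=
      LinearMap.pi fun j => (aeval (fun v : (i : Fin 2) × Fin (biDims i + 1) =>
        p j v.1 v.2)).toLinearMap ∘ₗ L
    have hE : LinearMap.ker E ≠ ⊥ := LinearMap.ker_ne_bot_of_finrank_lt (by
      simp
      omega)
    obtain ⟨c, hc, hc0⟩ := (Submodule.ne_bot_iff _).mp hE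
    have hv : ∀ j, aeval (fun v : (i : Fin 2) × Fin (biDims i + 1) => p j v.1 v.2) (L c) = 0 :=
      fun j => congrFun (LinearMap.mem_ker.mp hc) j
    have hne : L c ≠ 0 := by
      intro h0
      apply hc0
      ext s
      have := congrArg (coeff (expo a s)) h0
      rw [hL, coeff_sum, Finset.sum_eq_single s] at this
      · simpa using this
      · intro t _ hts
        rw [coeff_monomial, if_neg fun h => hts (expo_injective a h)]
      · simp
    have hh : IsWeightedHomogeneous (fun v : (i : Fin 2) × Fin (biDims i + 1) =>
        (Pi.single v.1 1 : Fin 2 → ℕ)) (L c) ![a, 1] := by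
      rw [hL]
      exact IsWeightedHomogeneous.sum _ _ _ fun s _ =>
        isWeightedHomogeneous_monomial _ _ _ (expo_weight a s)
    refine ⟨L c ^ 2, pow_ne_zero 2 hne, ?_⟩
    refine Submodule.mem_inf.mpr ⟨?_, ?_⟩
    · have := hh.pow 2
      have e : 2 • ![a, 1] = ![2 * a, 2] := by simp
      rw [e] at this
      exact this
    · rw [Submodule.mem_iInf]
      intro j
      have hj := hv j
      rw [aeval_eq_eval] at hj
      refine Submodule.mem_inf.mpr ⟨?_, ?_⟩
      · simp [vanishingAt, hj]
      · rw [Submodule.mem_iInf]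
        intro v
        simp [vanishingAt, hj, pow_two]
  refine ⟨key, ?_⟩
  obtain ⟨f, hf0, hf⟩ := key
  have := multiHomog_finite ![2 * a, 2]
  have : Module.Finite ℂ (doubleVanishingSpace biDims ![2 * a, 2] p) :=
    Submodule.finiteDimensional_of_le (S₂ := multiHomog biDims ![2 * a, 2]) inf_le_left
  have : Nontrivial (doubleVanishingSpace biDims ![2 * a, 2] p) :=
    ⟨⟨⟨f, hf⟩, 0, fun h => hf0 (congrArg Subtype.val h)⟩⟩
  exact Module.finrank_pos
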